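/- arXiv:2309.06718 — 3 statements merged into one kernel-verified Lean document; each statement's English description precedes it below -/
import Mathlib

section
/- Let n ≥ 1 and l ≥ 1 be integers and let γ, c, θ, η, k₁, k₂, ω₀, ω₁ be positive reals such that κ := γ − n/(2c) − θ > 0 and k₂ > 1/(4κ). Set ω := (ω₁² + l·ω₀² + l·ω₀⁴)/(2η) and χ := min{2κ − 1/(2k₂), 2k₁, θ}. Let z, e : [0,∞) → ℝⁿ and r : [0,∞) → ℝ be differentiable, let Δ₁,…,Δₙ : [0,∞) → ℝ^{n×n} be continuous matrix-valued functions, let P, P₁,…,P_l, Q₁,…,Q_l : [0,∞) → ℝ be continuous nonnegative functions, and let G : [0,∞) → ℝⁿ be continuous with ‖G(t)‖ ≤ ω₁·P(t) + ω₀·Σ_{i=1}^{l} P_i(t) + ω₀²·Σ_{i=1}^{l} Q_i(t) for all t ≥ 0. Suppose that for all t ≥ 0: (i) ż(t) = [θ(r(t)−1)/r(t) − (c/2)·Σ_{j=1}^{n} e_j(t)²‖Δ_j(t)‖² − (η/2)(P(t)² + Σ_{i=1}^{l}(P_i(t)² + Q_i(t)²)) − γ]·z(t) + (Σ_{j=1}^{n}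 e_j(t)·Δ_j(t))·z(t) + G(t)/r(t); (ii) ė(t) = r(t)·z(t) − Λ(t)·e(t) where Λ(t) = (k₁ + k₂·r(t)²)·Iₙ + (c·r(t)²/2)·diag(‖Δ₁(t)‖²,…,‖Δₙ(t)‖²); (iii) ṙ(t) = −θ(r(t)−1) + (c·r(t)/2)·Σ_{j=1}^{n} e_j(t)²‖Δ_j(t)‖² with r(0) > 1. Then for all t ≥ 0, r(t) ≥ 1, ‖z(t)‖ ≤ √(‖z(0)‖²·e^{−2κt} + ω/κ), r(t) ≤ √(2W₀·e^{−χt} + (θ+2ω)/χ) with W₀ := (1/2)(‖z(0)‖² + ‖e(0)‖² + r(0)²), and consequently ‖r(t)·z(t)‖ ≤ √(‖z(0)‖²·e^{−2κt} + ω/κ) · √(2W₀·e^{−χt} + (θ+2ω)/χ); in particular the scaled estimation error e_d = r·z is globally uniformly ultimately bounded. -/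
/-- Frobenius norm of a real matrix. -/
noncomputable def frobNorm {n m : ℕ} (B : Matrix (Fin n) (Fin m) ℝ) : ℝ :=
  Real.sqrt (∑ i, ∑ j, (B i j) ^ 2)

/-- Matrix-vector product, with values in Euclidean space. -/
noncomputable def matVec {n m : ℕ} (B : Matrix (Fin n) (Fin m) ℝ)
    (v : EuclideanSpace ℝ (Fin m)) : EuclideanSpace ℝ (Fin n) :=
  WithLp.toLp 2 (fun i => ∑ j, B i j * v j)

/-!
Both estimates are comparison arguments for a quadratic Lyapunov function satisfying
`V' ≤ -a V + b`. For `‖z‖²`, the two quadratic damping terms built into the dynamics of `z` are what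
Young's inequality needs to absorb the state-dependent drift `∑ j, e_j Δ_j` and the forcing `G`,
leaving the constants `n / (2c)` and `ω`. For `‖z‖² + ‖e‖² + r²`, the term
`c r² ∑ j, e_j² ‖Δ_j‖²` by which the adaptation law makes `r²` grow is exactly cancelled by the
diagonal gain in the dynamics of `e`, and the gain `k₂ r²` absorbs the coupling `r z`.
Dividing by `r` is harmless because the adaptation law keeps `r ≥ 1`.
-/

section Comparison

theorem le_mul_exp_add_div_of_deriv_le {f f' : ℝ → ℝ} {a b : ℝ} (ha : 0 < a) (hb : 0 ≤ b)
    (hf : ∀ t ≥ (0 : ℝ), HasDerivWithinAt f (f' t) (Set.Ici 0) t)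
    (hle : ∀ t ≥ (0 : ℝ), f' t ≤ -a * f t + b) {t : ℝ} (ht : 0 ≤ t) :
    f t ≤ f 0 * Real.exp (-a * t) + b / a := by
  have hgronwall : f t ≤ gronwallBound (f 0) (-a) b (t - 0) :=
    le_gronwallBound_of_liminf_deriv_right_le
      (fun s hs => ((hf s hs.1).mono Set.Icc_subset_Ici_self).continuousWithinAt)
      (fun s hs _ hlt => ((hf s hs.1).mono (Set.Ici_subset_Ici.2 hs.1)).liminf_right_slope_le hlt)
      le_rfl (fun s hs => hle s hs.1) t (Set.right_mem_Icc.2 ht)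
  calc f t ≤ f 0 * Real.exp (-a * t) + b / a * (1 - Real.exp (-a * t)) := by
        rw [gronwallBound_of_K_ne_0 (neg_ne_zero.2 ha.ne'), sub_zero, div_neg] at hgronwall
        linarith
    _ ≤ f 0 * Real.exp (-a * t) + b / a := by
        gcongr
        exact mul_le_of_le_one_right (by positivity) (by linarith [Real.exp_pos (-a * t)])

theorem le_of_deriv_pos_of_eq {f f' : ℝ → ℝ} {m : ℝ}
    (hf : ∀ t ≥ (0 : ℝ), HasDerivWithinAt f (f' t) (Set.Ici 0) t) (h₀ : m ≤ f 0)
    (hpos : ∀ t ≥ (0 : ℝ), f t = m → 0 < f' t) {t : ℝ} (ht : 0 ≤ t) : m ≤ f t := by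
  have hneg : -f t ≤ -m :=
    image_le_of_deriv_right_lt_deriv_boundary (f := fun s => -f s) (f' := fun s => -f' s)
      (B := fun _ => -m) (B' := fun _ => 0)
      (fun s hs => ((hf s hs.1).mono Set.Icc_subset_Ici_self).continuousWithinAt.neg)
      (fun s hs => ((hf s hs.1).mono (Set.Ici_subset_Ici.2 hs.1)).neg)
      (neg_le_neg h₀) (fun s => hasDerivAt_const s _)
      (fun s hs heq => neg_lt_zero.2 (hpos s hs.1 (neg_injective heq))) (Set.right_mem_Icc.2 ht)
  exact neg_le_neg_iff.1 hneg

theorem one_le_of_adaptive_scaling {r S : ℝ → ℝ} {θ c : ℝ} (hθ : 0 < θ) (hc : 0 ≤ c)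
    (hS : ∀ t ≥ (0 : ℝ), 0 ≤ S t)
    (hr : ∀ t ≥ (0 : ℝ),
      HasDerivWithinAt r (-θ * (r t - 1) + c * r t / 2 * S t) (Set.Ici 0) t)
    (h₀ : 1 ≤ r 0) {t : ℝ} (ht : 0 ≤ t) : 1 ≤ r t := by
  -- At the level `1` itself `r'` may vanish, so the levels in `(0, 1)` serve as barriers.
  refine le_of_forall_lt_imp_le_of_dense fun a ha => ?_
  obtain ⟨m, ham, hm⟩ := exists_between (max_lt ha one_pos)
  have hm₀ : 0 < m := (le_max_right _ _).trans_lt ham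
  have hmr : m ≤ r t := by
    refine le_of_deriv_pos_of_eq hr (hm.le.trans h₀) (fun s hs₀ hs => ?_) ht
    have hdamp : 0 < -θ * (m - 1) := mul_pos_of_neg_of_neg (neg_neg_of_pos hθ) (sub_neg.2 hm)
    have hgrow : 0 ≤ c * m / 2 * S s := mul_nonneg (by positivity) (hS s hs₀)
    rw [hs]
    exact add_pos_of_pos_of_nonneg hdamp hgrow
  exact ((le_max_left _ _).trans ham.le).trans hmr

end Comparison

section Young

theorem mul_le_half_mul_sq_add_sq_div {ε : ℝ} (hε : 0 < ε) (x y : ℝ) :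
    x * y ≤ ε / 2 * y ^ 2 + x ^ 2 / (2 * ε) := by
  have hyoung : 2 * y * x ≤ ε * y ^ 2 + ε⁻¹ * x ^ 2 := two_mul_le_add_mul_sq hε
  calc x * y = 2 * y * x / 2 := by ring
    _ ≤ (ε * y ^ 2 + ε⁻¹ * x ^ 2) / 2 := by gcongr
    _ = ε / 2 * y ^ 2 + x ^ 2 / (2 * ε) := by field_simp

theorem mul_sum_le_half_mul_sum_sq_add {ι : Type*} [Fintype ι] {ε : ℝ} (hε : 0 < ε) (x : ℝ)
    (y : ι → ℝ) :
    x * ∑ i, y i ≤ ε / 2 * ∑ i, y i ^ 2 + Fintype.card ι * (x ^ 2 / (2 * ε)) := by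
  calc x * ∑ i, y i = ∑ i, x * y i := Finset.mul_sum ..
    _ ≤ ∑ i, (ε / 2 * y i ^ 2 + x ^ 2 / (2 * ε)) :=
        Finset.sum_le_sum fun i _ => mul_le_half_mul_sq_add_sq_div hε x (y i)
    _ = ε / 2 * ∑ i, y i ^ 2 + Fintype.card ι * (x ^ 2 / (2 * ε)) := by
        rw [Finset.sum_add_distrib, ← Finset.mul_sum, Finset.sum_const, Finset.card_univ,
          nsmul_eq_mul]

theorem mul_disturbance_bound_le {ι : Type*} [Fintype ι] {η : ℝ} (hη : 0 < η) (ω₀ ω₁ x p : ℝ)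
    (p' q : ι → ℝ) :
    x * (ω₁ * p + ω₀ * ∑ i, p' i + ω₀ ^ 2 * ∑ i, q i) ≤
      η / 2 * (p ^ 2 + ∑ i, (p' i ^ 2 + q i ^ 2)) * x ^ 2 +
        (ω₁ ^ 2 + Fintype.card ι * ω₀ ^ 2 + Fintype.card ι * ω₀ ^ 4) / (2 * η) := by
  have hp := mul_le_half_mul_sq_add_sq_div hη ω₁ (p * x)
  have hp' := mul_sum_le_half_mul_sum_sq_add hη ω₀ fun i => p' i * x
  have hq := mul_sum_le_half_mul_sum_sq_add hη (ω₀ ^ 2) fun i => q i * x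
  simp only [mul_pow, ← Finset.sum_mul] at hp hp' hq
  calc x * (ω₁ * p + ω₀ * ∑ i, p' i + ω₀ ^ 2 * ∑ i, q i)
      = ω₁ * (p * x) + ω₀ * ((∑ i, p' i) * x) + ω₀ ^ 2 * ((∑ i, q i) * x) := by ring
    _ ≤ _ := add_le_add (add_le_add hp hp') hq
    _ = _ := by
        rw [Finset.sum_add_distrib]
        ring

end Young

section MatVec

variable {n m : ℕ}

theorem matVec_eq_toEuclideanLin (B : Matrix (Fin n) (Fin m) ℝ)
    (v : EuclideanSpace ℝ (Fin m)) : matVec B v = Matrix.toEuclideanLin B v :=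
  rfl

theorem frobNorm_nonneg (B : Matrix (Fin n) (Fin m) ℝ) : 0 ≤ frobNorm B :=
  Real.sqrt_nonneg _

theorem norm_matVec_le (B : Matrix (Fin n) (Fin m) ℝ) (v : EuclideanSpace ℝ (Fin m)) :
    ‖matVec B v‖ ≤ frobNorm B * ‖v‖ := by
  refine le_of_sq_le_sq ?_ (mul_nonneg (frobNorm_nonneg B) (norm_nonneg v))
  rw [mul_pow, frobNorm, Real.sq_sqrt (by positivity), EuclideanSpace.real_norm_sq_eq,
    EuclideanSpace.real_norm_sq_eq, Finset.sum_mul]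
  exact Finset.sum_le_sum fun i _ => Finset.sum_mul_sq_le_sq_mul_sq Finset.univ (B i) v

theorem inner_matVec_sum_smul_le {ι : Type*} [Fintype ι] {c : ℝ} (hc : 0 < c) (a : ι → ℝ)
    (D : ι → Matrix (Fin n) (Fin n) ℝ) (v : EuclideanSpace ℝ (Fin n)) :
    inner ℝ v (matVec (∑ j, a j • D j) v) ≤
      (c / 2 * ∑ j, a j ^ 2 * frobNorm (D j) ^ 2 + Fintype.card ι / (2 * c)) * ‖v‖ ^ 2 := by
  have hterm (j : ι) : inner ℝ v (a j • matVec (D j) v) ≤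
      ‖v‖ * (|a j| * frobNorm (D j) * ‖v‖) :=
    calc inner ℝ v (a j • matVec (D j) v) ≤ ‖v‖ * ‖a j • matVec (D j) v‖ :=
          real_inner_le_norm _ _
      _ ≤ ‖v‖ * (|a j| * frobNorm (D j) * ‖v‖) := by
          rw [norm_smul, Real.norm_eq_abs, mul_assoc |a j|]
          gcongr
          exact norm_matVec_le (D j) v
  calc inner ℝ v (matVec (∑ j, a j • D j) v) = ∑ j, inner ℝ v (a j • matVec (D j) v) := by
        simp only [matVec_eq_toEuclideanLin, map_sum, map_smul, LinearMap.sum_apply,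
          LinearMap.smul_apply, inner_sum]
    _ ≤ ‖v‖ * ∑ j, |a j| * frobNorm (D j) * ‖v‖ := by
        rw [Finset.mul_sum]
        exact Finset.sum_le_sum fun j _ => hterm j
    _ ≤ c / 2 * ∑ j, (|a j| * frobNorm (D j) * ‖v‖) ^ 2 +
          Fintype.card ι * (‖v‖ ^ 2 / (2 * c)) := mul_sum_le_half_mul_sum_sq_add hc _ _
    _ = _ := by
        simp only [mul_pow, sq_abs, ← Finset.sum_mul]
        ring

theorem inner_matVec_smul_one_add_smul_diagonal (a b : ℝ) (d : Fin n → ℝ)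
    (v : EuclideanSpace ℝ (Fin n)) :
    inner ℝ v (matVec (a • (1 : Matrix (Fin n) (Fin n) ℝ) + b • Matrix.diagonal d) v) =
      a * ‖v‖ ^ 2 + b * ∑ j, v j ^ 2 * d j := by
  have hone : matVec (1 : Matrix (Fin n) (Fin n) ℝ) v = v := by
    simp [matVec_eq_toEuclideanLin]
  have hdiag : inner ℝ v (matVec (Matrix.diagonal d) v) = ∑ j, v j ^ 2 * d j := by
    simp [matVec, PiLp.inner_apply, Matrix.diagonal_apply, sq, mul_comm, mul_left_comm]
  calc inner ℝ v (matVec (a • (1 : Matrix (Fin n) (Fin n) ℝ) + b • Matrix.diagonal d) v)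
      = a * inner ℝ v (matVec 1 v) + b * inner ℝ v (matVec (Matrix.diagonal d) v) := by
        simp only [matVec_eq_toEuclideanLin, map_add, map_smul, LinearMap.add_apply,
          LinearMap.smul_apply, inner_add_right, real_inner_smul_right]
    _ = a * ‖v‖ ^ 2 + b * ∑ j, v j ^ 2 * d j := by
        rw [hone, real_inner_self_eq_norm_sq, hdiag]

end MatVec

section Dissipation

variable {E : Type*} [NormedAddCommGroup E] [InnerProductSpace ℝ E]

theorem norm_sq_le_of_inner_deriv_le {x x' : ℝ → E} {κ ω : ℝ} (hκ : 0 < κ) (hω : 0 ≤ ω)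
    (hx : ∀ t ≥ (0 : ℝ), HasDerivWithinAt x (x' t) (Set.Ici 0) t)
    (hle : ∀ t ≥ (0 : ℝ), inner ℝ (x t) (x' t) ≤ -κ * ‖x t‖ ^ 2 + ω) {t : ℝ} (ht : 0 ≤ t) :
    ‖x t‖ ^ 2 ≤ ‖x 0‖ ^ 2 * Real.exp (-2 * κ * t) + ω / κ := by
  have hdecay := le_mul_exp_add_div_of_deriv_le (a := 2 * κ) (b := 2 * ω) (by positivity)
    (by positivity) (fun s hs => (hx s hs).norm_sq) (fun s hs => by linarith [hle s hs]) ht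
  rwa [mul_div_mul_left _ _ two_ne_zero, ← neg_mul] at hdecay

theorem inner_smul_right_le_young {k : ℝ} (hk : 0 < k) (r : ℝ) (e z : E) :
    inner ℝ e (r • z) ≤ ‖z‖ ^ 2 / (4 * k) + k * r ^ 2 * ‖e‖ ^ 2 := by
  calc inner ℝ e (r • z) = inner ℝ z (r • e) := by
        rw [real_inner_smul_right, real_inner_smul_right, real_inner_comm]
    _ ≤ ‖z‖ * ‖r • e‖ := real_inner_le_norm _ _
    _ ≤ 2 * k / 2 * ‖r • e‖ ^ 2 + ‖z‖ ^ 2 / (2 * (2 * k)) :=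
        mul_le_half_mul_sq_add_sq_div (by positivity) _ _
    _ = ‖z‖ ^ 2 / (4 * k) + k * r ^ 2 * ‖e‖ ^ 2 := by
        rw [norm_smul, mul_pow, Real.norm_eq_abs, sq_abs]
        ring

theorem inner_damped_scaled_field_le {θ γ r s N d ω : ℝ} (hθ : 0 ≤ θ) (hr : 1 ≤ r)
    {z a g : E} (ha : inner ℝ z a ≤ (s + N) * ‖z‖ ^ 2) (hg : ‖z‖ * ‖g‖ ≤ d * ‖z‖ ^ 2 + ω) :
    inner ℝ z ((θ * (r - 1) / r - s - d - γ) • z + a + r⁻¹ • g) ≤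
      -(γ - N - θ) * ‖z‖ ^ 2 + ω := by
  have hr₀ : 0 < r := one_pos.trans_le hr
  have hscale : θ * (r - 1) / r * ‖z‖ ^ 2 ≤ θ * ‖z‖ ^ 2 := by
    gcongr
    rw [div_le_iff₀ hr₀]
    gcongr
    linarith
  have hforce : inner ℝ z (r⁻¹ • g) ≤ d * ‖z‖ ^ 2 + ω :=
    calc inner ℝ z (r⁻¹ • g) ≤ ‖z‖ * (r⁻¹ * ‖g‖) := by
          simpa [norm_smul, abs_of_pos hr₀] using real_inner_le_norm z (r⁻¹ • g)
      _ ≤ ‖z‖ * ‖g‖ := by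
          gcongr
          exact mul_le_of_le_one_left (norm_nonneg g) (inv_le_one_of_one_le₀ hr)
      _ ≤ d * ‖z‖ ^ 2 + ω := hg
  rw [inner_add_right, inner_add_right, real_inner_smul_right, real_inner_self_eq_norm_sq]
  linarith

theorem decay_rate_pos {κ k₁ k₂ θ : ℝ} (hκ : 0 < κ) (hk₁ : 0 < k₁) (hk₂ : 1 / (4 * κ) < k₂)
    (hθ : 0 < θ) : 0 < min (2 * κ - 1 / (2 * k₂)) (min (2 * k₁) θ) := by
  have hk₂₀ : 0 < k₂ := lt_trans (by positivity) hk₂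
  have hgain : 1 < k₂ * (4 * κ) := (div_lt_iff₀ (by positivity)).1 hk₂
  have hfirst : 1 / (2 * k₂) < 2 * κ := by
    rw [div_lt_iff₀ (by positivity)]
    linarith
  exact lt_min (sub_pos.2 hfirst) (lt_min (by positivity) hθ)

theorem lyapunov_le_of_inner_deriv_le {F : Type*} [NormedAddCommGroup F] [InnerProductSpace ℝ F]
    {z z' : ℝ → E} {e e' : ℝ → F} {r S : ℝ → ℝ} {κ ω θ c k₁ k₂ χ : ℝ}
    (hω : 0 ≤ ω) (hχ : 0 < χ) (hχκ : χ ≤ 2 * κ - 1 / (2 * k₂)) (hχk₁ : χ ≤ 2 * k₁) (hχθ : χ ≤ θ)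
    (hz : ∀ t ≥ (0 : ℝ), HasDerivWithinAt z (z' t) (Set.Ici 0) t)
    (he : ∀ t ≥ (0 : ℝ), HasDerivWithinAt e (e' t) (Set.Ici 0) t)
    (hr : ∀ t ≥ (0 : ℝ),
      HasDerivWithinAt r (-θ * (r t - 1) + c * r t / 2 * S t) (Set.Ici 0) t)
    (hz' : ∀ t ≥ (0 : ℝ), inner ℝ (z t) (z' t) ≤ -κ * ‖z t‖ ^ 2 + ω)
    (he' : ∀ t ≥ (0 : ℝ), inner ℝ (e t) (e' t) ≤
      ‖z t‖ ^ 2 / (4 * k₂) - k₁ * ‖e t‖ ^ 2 - c * r t ^ 2 / 2 * S t)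
    {t : ℝ} (ht : 0 ≤ t) :
    ‖z t‖ ^ 2 + ‖e t‖ ^ 2 + r t ^ 2 ≤
      (‖z 0‖ ^ 2 + ‖e 0‖ ^ 2 + r 0 ^ 2) * Real.exp (-χ * t) + (θ + 2 * ω) / χ := by
  have hθ : 0 ≤ θ := hχ.le.trans hχθ
  refine le_mul_exp_add_div_of_deriv_le (f := fun s => ‖z s‖ ^ 2 + ‖e s‖ ^ 2 + r s ^ 2) hχ
    (by positivity) (fun s hs => ((hz s hs).norm_sq.add (he s hs).norm_sq).add ((hr s hs).pow 2))
    (fun s hs => ?_) ht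
  have hzs : 2 * inner ℝ (z s) (z' s) ≤ -(2 * κ) * ‖z s‖ ^ 2 + 2 * ω := by linarith [hz' s hs]
  have hes : 2 * inner ℝ (e s) (e' s) ≤
      1 / (2 * k₂) * ‖z s‖ ^ 2 - 2 * k₁ * ‖e s‖ ^ 2 - c * r s ^ 2 * S s := by
    have hhalf : ‖z s‖ ^ 2 / (4 * k₂) = 1 / (2 * k₂) * ‖z s‖ ^ 2 / 2 := by ring
    linarith [he' s hs]
  -- `-2 r (r - 1) = -r² + 1 - (r - 1)²`
  have hrs : 2 * r s * (-θ * (r s - 1) + c * r s / 2 * S s) ≤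
      -θ * r s ^ 2 + θ + c * r s ^ 2 * S s := by
    have hsq : 0 ≤ θ * (r s - 1) ^ 2 := by positivity
    linarith
  have hχz := mul_le_mul_of_nonneg_right hχκ (sq_nonneg ‖z s‖)
  have hχe := mul_le_mul_of_nonneg_right hχk₁ (sq_nonneg ‖e s‖)
  have hχr := mul_le_mul_of_nonneg_right hχθ (sq_nonneg (r s))
  push_cast
  linarith

end Dissipation

section ErrorFields

variable {n : ℕ}

theorem inner_scaled_error_field_le {ι J : Type*} [Fintype ι] [Fintype J]
    {γ c θ η ω₀ ω₁ r p : ℝ} (hc : 0 < c) (hθ : 0 ≤ θ) (hη : 0 < η) (hr : 1 ≤ r)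
    (a : J → ℝ) (D : J → Matrix (Fin n) (Fin n) ℝ) {p' q : ι → ℝ}
    (z : EuclideanSpace ℝ (Fin n)) {g : EuclideanSpace ℝ (Fin n)}
    (hg : ‖g‖ ≤ ω₁ * p + ω₀ * ∑ i, p' i + ω₀ ^ 2 * ∑ i, q i) :
    inner ℝ z ((θ * (r - 1) / r - c / 2 * ∑ j, a j ^ 2 * frobNorm (D j) ^ 2 -
        η / 2 * (p ^ 2 + ∑ i, (p' i ^ 2 + q i ^ 2)) - γ) • z +
        matVec (∑ j, a j • D j) z + r⁻¹ • g) ≤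
      -(γ - Fintype.card J / (2 * c) - θ) * ‖z‖ ^ 2 +
        (ω₁ ^ 2 + Fintype.card ι * ω₀ ^ 2 + Fintype.card ι * ω₀ ^ 4) / (2 * η) :=
  inner_damped_scaled_field_le hθ hr (inner_matVec_sum_smul_le hc a D z)
    ((mul_le_mul_of_nonneg_left hg (norm_nonneg z)).trans
      (mul_disturbance_bound_le hη ω₀ ω₁ ‖z‖ p p' q))

theorem inner_state_error_field_le {c k₁ k₂ : ℝ} (hk₂ : 0 < k₂) (r : ℝ) (d : Fin n → ℝ)
    (z e : EuclideanSpace ℝ (Fin n)) :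
    inner ℝ e (r • z - matVec ((k₁ + k₂ * r ^ 2) • (1 : Matrix (Fin n) (Fin n) ℝ) +
        (c * r ^ 2 / 2) • Matrix.diagonal d) e) ≤
      ‖z‖ ^ 2 / (4 * k₂) - k₁ * ‖e‖ ^ 2 - c * r ^ 2 / 2 * ∑ j, e j ^ 2 * d j := by
  rw [inner_sub_right, inner_matVec_smul_one_add_smul_diagonal]
  linarith [inner_smul_right_le_young hk₂ r e z]

end ErrorFields

theorem stmt2_general {ι : Type*} [Fintype ι] {n : ℕ} {γ c θ η k₁ k₂ ω₀ ω₁ κ ω χ W₀ : ℝ}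
    (hc : 0 < c) (hθ : 0 < θ) (hη : 0 < η) (hk₁ : 0 < k₁)
    (hκdef : κ = γ - (n : ℝ) / (2 * c) - θ) (hκpos : 0 < κ) (hk₂κ : k₂ > 1 / (4 * κ))
    (hωdef : ω = (ω₁ ^ 2 + (Fintype.card ι : ℝ) * ω₀ ^ 2 + (Fintype.card ι : ℝ) * ω₀ ^ 4) /
      (2 * η))
    (hχdef : χ = min (2 * κ - 1 / (2 * k₂)) (min (2 * k₁) θ))
    {z e : ℝ → EuclideanSpace ℝ (Fin n)} {r : ℝ → ℝ}
    {Δ : Fin n → ℝ → Matrix (Fin n) (Fin n) ℝ} {P : ℝ → ℝ} {P' Q : ι → ℝ → ℝ}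
    {G : ℝ → EuclideanSpace ℝ (Fin n)}
    (hGbound : ∀ t ≥ (0 : ℝ), ‖G t‖ ≤ ω₁ * P t + ω₀ * ∑ i, P' i t + ω₀ ^ 2 * ∑ i, Q i t)
    (hz : ∀ t ≥ (0 : ℝ), HasDerivWithinAt z
      ((θ * (r t - 1) / r t
          - c / 2 * ∑ j, (e t j) ^ 2 * (frobNorm (Δ j t)) ^ 2
          - η / 2 * ((P t) ^ 2 + ∑ i, ((P' i t) ^ 2 + (Q i t) ^ 2))
          - γ) • z t
        + matVec (∑ j, (e t j) • Δ j t) (z t)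
        + (r t)⁻¹ • G t) (Set.Ici 0) t)
    (he : ∀ t ≥ (0 : ℝ), HasDerivWithinAt e
      (r t • z t
        - matVec ((k₁ + k₂ * (r t) ^ 2) • (1 : Matrix (Fin n) (Fin n) ℝ)
            + (c * (r t) ^ 2 / 2) •
              Matrix.diagonal (fun j => (frobNorm (Δ j t)) ^ 2)) (e t)) (Set.Ici 0) t)
    (hr : ∀ t ≥ (0 : ℝ), HasDerivWithinAt r
      (-θ * (r t - 1) + c * r t / 2 * ∑ j, (e t j) ^ 2 * (frobNorm (Δ j t)) ^ 2) (Set.Ici 0) t)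
    (hr0 : 1 ≤ r 0)
    (hW₀ : W₀ = (1 / 2) * (‖z 0‖ ^ 2 + ‖e 0‖ ^ 2 + (r 0) ^ 2)) {t : ℝ} (ht : 0 ≤ t) :
    1 ≤ r t ∧
      ‖z t‖ ≤ Real.sqrt (‖z 0‖ ^ 2 * Real.exp (-2 * κ * t) + ω / κ) ∧
      r t ≤ Real.sqrt (2 * W₀ * Real.exp (-χ * t) + (θ + 2 * ω) / χ) ∧
      ‖r t • z t‖ ≤ Real.sqrt (‖z 0‖ ^ 2 * Real.exp (-2 * κ * t) + ω / κ) *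
        Real.sqrt (2 * W₀ * Real.exp (-χ * t) + (θ + 2 * ω) / χ) := by
  have hω : 0 ≤ ω := by rw [hωdef]; positivity
  have hk₂ : 0 < k₂ := lt_trans (by positivity) hk₂κ
  have hχ : 0 < χ := hχdef ▸ decay_rate_pos hκpos hk₁ hk₂κ hθ
  obtain ⟨hχκ, hχk₁, hχθ⟩ : χ ≤ 2 * κ - 1 / (2 * k₂) ∧ χ ≤ 2 * k₁ ∧ χ ≤ θ := by
    simpa only [le_min_iff] using hχdef.le
  have hr₁ : ∀ s ≥ (0 : ℝ), 1 ≤ r s := fun s hs =>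
    one_le_of_adaptive_scaling hθ hc.le (fun _ _ => by positivity) hr hr0 hs
  have hz' (s : ℝ) (hs : s ≥ 0) := inner_scaled_error_field_le (γ := γ) hc hθ.le hη (hr₁ s hs)
    (fun j => e s j) (fun j => Δ j s) (z s) (hGbound s hs)
  rw [Fintype.card_fin, ← hκdef, ← hωdef] at hz'
  have hnorm : ‖z t‖ ≤ Real.sqrt (‖z 0‖ ^ 2 * Real.exp (-2 * κ * t) + ω / κ) :=
    Real.le_sqrt_of_sq_le (norm_sq_le_of_inner_deriv_le hκpos hω hz hz' ht)
  have hscale : r t ≤ Real.sqrt (2 * W₀ * Real.exp (-χ * t) + (θ + 2 * ω) / χ) := by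
    have hlyapunov := lyapunov_le_of_inner_deriv_le hω hχ hχκ hχk₁ hχθ hz he hr hz'
      (fun s _ => inner_state_error_field_le hk₂ (r s) _ (z s) (e s)) ht
    have h2W₀ : 2 * W₀ = ‖z 0‖ ^ 2 + ‖e 0‖ ^ 2 + r 0 ^ 2 := by rw [hW₀]; ring
    rw [h2W₀]
    exact Real.le_sqrt_of_sq_le (le_trans (le_add_of_nonneg_left (by positivity)) hlyapunov)
  have hr₀ : 0 ≤ r t := zero_le_one.trans (hr₁ t ht)
  refine ⟨hr₁ t ht, hnorm, hscale, ?_⟩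
  rw [norm_smul, Real.norm_of_nonneg hr₀, mul_comm]
  exact mul_le_mul hnorm hscale hr₀ (Real.sqrt_nonneg _)

/-- Theorem 1 of the paper, error-dynamics form: the IIDOB disturbance
estimation error `e_d = r·z` is globally uniformly ultimately bounded. -/
theorem stmt2 (n l : ℕ) (hn : 1 ≤ n) (hl : 1 ≤ l)
    (γ c θ η k₁ k₂ ω₀ ω₁ : ℝ)
    (hγ : 0 < γ) (hc : 0 < c) (hθ : 0 < θ) (hη : 0 < η)
    (hk₁ : 0 < k₁) (hk₂ : 0 < k₂) (hω₀ : 0 < ω₀) (hω₁ : 0 < ω₁)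
    (κ ω χ W₀ : ℝ)
    (hκdef : κ = γ - (n : ℝ) / (2 * c) - θ) (hκpos : 0 < κ)
    (hk₂κ : k₂ > 1 / (4 * κ))
    (hωdef : ω = (ω₁ ^ 2 + (l : ℝ) * ω₀ ^ 2 + (l : ℝ) * ω₀ ^ 4) / (2 * η))
    (hχdef : χ = min (2 * κ - 1 / (2 * k₂)) (min (2 * k₁) θ))
    (z e : ℝ → EuclideanSpace ℝ (Fin n)) (r : ℝ → ℝ)
    (Δ : Fin n → ℝ → Matrix (Fin n) (Fin n) ℝ)
    (hΔcont : ∀ j, ContinuousOn (Δ j) (Set.Ici (0 : ℝ)))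
    (P : ℝ → ℝ) (P' Q : Fin l → ℝ → ℝ)
    (hPcont : ContinuousOn P (Set.Ici (0 : ℝ)))
    (hP'cont : ∀ i, ContinuousOn (P' i) (Set.Ici (0 : ℝ)))
    (hQcont : ∀ i, ContinuousOn (Q i) (Set.Ici (0 : ℝ)))
    (hPpos : ∀ t ≥ (0 : ℝ), 0 ≤ P t)
    (hP'pos : ∀ i, ∀ t ≥ (0 : ℝ), 0 ≤ P' i t)
    (hQpos : ∀ i, ∀ t ≥ (0 : ℝ), 0 ≤ Q i t)
    (G : ℝ → EuclideanSpace ℝ (Fin n))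
    (hGcont : ContinuousOn G (Set.Ici (0 : ℝ)))
    (hGbound : ∀ t ≥ (0 : ℝ),
      ‖G t‖ ≤ ω₁ * P t + ω₀ * ∑ i, P' i t + ω₀ ^ 2 * ∑ i, Q i t)
    -- (i) scaled-estimation-error dynamics (17):
    (hz : ∀ t ≥ (0 : ℝ), HasDerivAt z
      ((θ * (r t - 1) / r t
          - c / 2 * ∑ j, (e t j) ^ 2 * (frobNorm (Δ j t)) ^ 2
          - η / 2 * ((P t) ^ 2 + ∑ i, ((P' i t) ^ 2 + (Q i t) ^ 2))
          - γ) • z t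
        + matVec (∑ j, (e t j) • Δ j t) (z t)
        + (r t)⁻¹ • G t) t)
    -- (ii) state-estimation-error dynamics (18):
    (he : ∀ t ≥ (0 : ℝ), HasDerivAt e
      (r t • z t
        - matVec ((k₁ + k₂ * (r t) ^ 2) • (1 : Matrix (Fin n) (Fin n) ℝ)
            + (c * (r t) ^ 2 / 2) •
              Matrix.diagonal (fun j => (frobNorm (Δ j t)) ^ 2)) (e t)) t)
    -- (iii) adaptive scaling law (13f):
    (hr : ∀ t ≥ (0 : ℝ), HasDerivAt r
      (-θ * (r t - 1) + c * r t / 2 * ∑ j, (e t j) ^ 2 * (frobNorm (Δ j t)) ^ 2) t)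
    (hr0 : 1 < r 0)
    (hW₀ : W₀ = (1 / 2) * (‖z 0‖ ^ 2 + ‖e 0‖ ^ 2 + (r 0) ^ 2)) :
    ∀ t ≥ (0 : ℝ),
      1 ≤ r t ∧
      ‖z t‖ ≤ Real.sqrt (‖z 0‖ ^ 2 * Real.exp (-2 * κ * t) + ω / κ) ∧
      r t ≤ Real.sqrt (2 * W₀ * Real.exp (-χ * t) + (θ + 2 * ω) / χ) ∧
      ‖r t • z t‖ ≤ Real.sqrt (‖z 0‖ ^ 2 * Real.exp (-2 * κ * t) + ω / κ) *
        Real.sqrt (2 * W₀ * Real.exp (-χ * t) + (θ + 2 * ω) / χ) :=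
  fun _ ht => stmt2_general hc hθ hη hk₁ hκdef hκpos hk₂κ (by rwa [Fintype.card_fin]) hχdef hGbound
    (fun s hs => (hz s hs).hasDerivWithinAt) (fun s hs => (he s hs).hasDerivWithinAt)
    (fun s hs => (hr s hs).hasDerivWithinAt) hr0.le hW₀ ht
end

section
/- Let ι ≥ 1 be an integer, let λ₀,…,λ_{ι−2} be positive reals, and let h₀, h₁, …, h_{ι−1} : [0,∞) → ℝ be differentiable functions satisfying h_i(t) = h_{i−1}'(t) + λ_{i−1}·h_{i−1}(t) for all t ≥ 0 and all i ∈ {1,…,ι−1}. Suppose h_i(0) ≥ 0 for every i ∈ {0,…,ι−2} and h_{ι−1}(t) ≥ 0 for all t ≥ 0. Then h₀(t) ≥ 0 for all t ≥ 0. -/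
/-!
The integrating factor `exp (c * t)` turns `f' + c * f ≥ 0` into the statement that
`exp (c * t) * f t` has nonnegative derivative, so `f` stays nonnegative once it starts
nonnegative. Applied to `f = h i` with `c = lam i`, this carries nonnegativity from `h (i + 1)`
to `h i`.
-/

open Set

theorem hasDerivWithinAt_exp_mul_smul {E : Type*} [NormedAddCommGroup E] [NormedSpace ℝ E]
    {f : ℝ → E} {f' : E} {s : Set ℝ} {x : ℝ} (c : ℝ) (hf : HasDerivWithinAt f f' s x) :
    HasDerivWithinAt (fun t ↦ Real.exp (c * t) • f t) (Real.exp (c * x) • (f' + c • f x)) s x := by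
  have hexp : HasDerivWithinAt (fun t ↦ Real.exp (c * t)) (Real.exp (c * x) * (c * 1)) s x :=
    ((hasDerivWithinAt_id x s).const_mul c).exp
  exact (hexp.smul hf).congr_deriv (by module)

theorem nonneg_of_deriv_right_add_mul_nonneg {f f' : ℝ → ℝ} {a b c : ℝ}
    (hf : ContinuousOn f (Icc a b))
    (hf' : ∀ t ∈ Ico a b, HasDerivWithinAt f (f' t) (Ici t) t)
    (ha : 0 ≤ f a) (hnonneg : ∀ t ∈ Ico a b, 0 ≤ f' t + c * f t) :
    ∀ t ∈ Icc a b, 0 ≤ f t := by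
  intro t ht
  have hexp_mul : 0 ≤ Real.exp (c * t) * f t :=
    image_le_of_deriv_right_le_deriv_boundary (a := a) (b := b) (f := fun _ ↦ 0)
      (f' := fun _ ↦ 0) (B := fun s ↦ Real.exp (c * s) * f s)
      continuousOn_const (fun _ _ ↦ hasDerivWithinAt_const ..)
      (mul_nonneg (Real.exp_nonneg _) ha)
      (ContinuousOn.mul (by fun_prop) hf)
      (fun s hs ↦ hasDerivWithinAt_exp_mul_smul c (hf' s hs))
      (fun s hs ↦ mul_nonneg (Real.exp_nonneg _) (hnonneg s hs)) ht
  exact nonneg_of_mul_nonneg_right hexp_mul (Real.exp_pos _)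

theorem stmt6_general {n : ℕ} {lam : ℕ → ℝ} {h h' : ℕ → ℝ → ℝ} {a b : ℝ}
    (hcont : ∀ i < n, ContinuousOn (h i) (Icc a b))
    (hderiv : ∀ i < n, ∀ t ∈ Ico a b, HasDerivWithinAt (h i) (h' i t) (Ici t) t)
    (hrec : ∀ i < n, ∀ t ∈ Ico a b, h (i + 1) t ≤ h' i t + lam i * h i t)
    (hinit : ∀ i < n, 0 ≤ h i a)
    (hlast : ∀ t ∈ Icc a b, 0 ≤ h n t) :
    ∀ i ≤ n, ∀ t ∈ Icc a b, 0 ≤ h i t := by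
  intro i hi
  induction hi using Nat.decreasingInduction with
  | self => exact hlast
  | of_succ i hi ih =>
    exact nonneg_of_deriv_right_add_mul_nonneg (hcont i hi) (hderiv i hi) (hinit i hi)
      fun t ht ↦ (ih t (Ico_subset_Icc_self ht)).trans (hrec i hi t ht)

/-- cascade / exponential-CBF argument of Theorem 2.
With `h_i = h_{i−1}' + λ_{i−1} h_{i−1}` for `i ∈ {1,…,ι−1}` (phrased below with
`i = j + 1`, `j + 2 ≤ ι`), `λ₀,…,λ_{ι−2} > 0`, `h_i(0) ≥ 0` for `i ∈ {0,…,ι−2}`, and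
`h_{ι−1}(t) ≥ 0` for all `t ≥ 0`, we get `h₀(t) ≥ 0` for all `t ≥ 0`. -/
theorem stmt6 (ι : ℕ) (hι : 1 ≤ ι)
    (lam : ℕ → ℝ) (hlam : ∀ j, j + 2 ≤ ι → 0 < lam j)
    (h h' : ℕ → ℝ → ℝ)
    (hdiff : ∀ i, i + 1 ≤ ι → ∀ t ≥ (0 : ℝ), HasDerivAt (h i) (h' i t) t)
    (hrec : ∀ j, j + 2 ≤ ι → ∀ t ≥ (0 : ℝ), h (j + 1) t = h' j t + lam j * h j t)
    (h0 : ∀ i, i + 2 ≤ ι → 0 ≤ h i 0)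
    (hlast : ∀ t ≥ (0 : ℝ), 0 ≤ h (ι - 1) t) :
    ∀ t ≥ (0 : ℝ), 0 ≤ h 0 t := by
  intro t ht
  exact stmt6_general
    (fun i hi s hs ↦ (hdiff i (by lia) s hs.1).continuousAt.continuousWithinAt)
    (fun i hi s hs ↦ (hdiff i (by lia) s hs.1).hasDerivWithinAt)
    (fun i hi s hs ↦ (hrec i (by lia) s hs.1).le) (fun i hi ↦ h0 i (by lia))
    (fun s hs ↦ hlast s hs.1) 0 (Nat.zero_le _) t ⟨ht, le_rfl⟩
end

section
/- Let κ, ω, ρ, λ > 0 be reals. Let h : [0,∞) → ℝ and z : [0,∞) → ℝⁿ be differentiable and suppose that for all t ≥ 0: (i) the function t ↦ (1/2)‖z(t)‖² is differentiable with derivative at most −κ‖z(t)‖² + ω, and (ii) h'(t) ≥ −λ·h(t) − ρ·(κ − λ/2)·‖z(t)‖² + ρ·ω. If h(0) ≥ (ρ/2)·‖z(0)‖², then h(t) ≥ (ρ/2)·‖z(t)‖² ≥ 0 for all t ≥ 0. -/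
/-
Write `V = ‖z‖² / 2`. The rate `κ - λ / 2` in the hypothesis on `h'` is chosen so that the bound
`V' ≤ -2κV + ω` turns it into `(h - ρV)' ≥ -λ(h - ρV)`. Grönwall's inequality, applied to
`-(h - ρV)`, then keeps `h - ρV` above a decaying exponential whose initial value is nonnegative.
-/

open Set

section Comparison

variable {f f' : ℝ → ℝ} {K a b : ℝ}

theorem mul_exp_le_of_mul_le_deriv_right (hf : ContinuousOn f (Icc a b))
    (hf' : ∀ x ∈ Ico a b, HasDerivWithinAt f (f' x) (Ici x) x)
    (bound : ∀ x ∈ Ico a b, K * f x ≤ f' x) :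
    ∀ x ∈ Icc a b, f a * Real.exp (K * (x - a)) ≤ f x := by
  intro x hx
  have bound_neg : ∀ y ∈ Ico a b, -f' y ≤ K * -f y + 0 := fun y hy => by
    linarith [bound y hy]
  have gronwall : -f x ≤ gronwallBound (-f a) K 0 (x - a) :=
    le_gronwallBound_of_liminf_deriv_right_le hf.neg
      (fun y hy _ hr => (hf' y hy).neg.liminf_right_slope_le hr) le_rfl bound_neg x hx
  rw [gronwallBound_ε0] at gronwall
  linarith

theorem nonneg_of_mul_le_deriv_right (hf : ContinuousOn f (Icc a b))
    (hf' : ∀ x ∈ Ico a b, HasDerivWithinAt f (f' x) (Ici x) x)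
    (ha : 0 ≤ f a) (bound : ∀ x ∈ Ico a b, K * f x ≤ f' x) :
    ∀ x ∈ Icc a b, 0 ≤ f x := fun x hx =>
  (mul_nonneg ha (Real.exp_pos _).le).trans (mul_exp_le_of_mul_le_deriv_right hf hf' bound x hx)

end Comparison

theorem mul_lyapunov_le_barrier {V V' h h' : ℝ → ℝ} {α ω ρ lam a b : ℝ} (hρ : 0 ≤ ρ)
    (hV : ContinuousOn V (Icc a b))
    (hVderiv : ∀ t ∈ Ico a b, HasDerivWithinAt V (V' t) (Ici t) t)
    (hV' : ∀ t ∈ Ico a b, V' t ≤ -α * V t + ω)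
    (hh : ContinuousOn h (Icc a b))
    (hhderiv : ∀ t ∈ Ico a b, HasDerivWithinAt h (h' t) (Ici t) t)
    (hh' : ∀ t ∈ Ico a b, -lam * h t - ρ * (α - lam) * V t + ρ * ω ≤ h' t)
    (ha : ρ * V a ≤ h a) :
    ∀ t ∈ Icc a b, ρ * V t ≤ h t := by
  have composite_bound : ∀ t ∈ Ico a b, -lam * (h t - ρ * V t) ≤ h' t - ρ * V' t := fun t ht =>
    calc
      -lam * (h t - ρ * V t)
          = (-lam * h t - ρ * (α - lam) * V t + ρ * ω) - ρ * (-α * V t + ω) := by ring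
      _ ≤ h' t - ρ * V' t :=
          sub_le_sub (hh' t ht) (mul_le_mul_of_nonneg_left (hV' t ht) hρ)
  intro t ht
  exact sub_nonneg.mp <| nonneg_of_mul_le_deriv_right (hh.sub (hV.const_mul ρ))
    (fun s hs => (hhderiv s hs).sub ((hVderiv s hs).const_mul ρ))
    (sub_nonneg.mpr ha) composite_bound t ht

theorem stmt10_general {E : Type*} [SeminormedAddCommGroup E] {κ ω ρ lam : ℝ} (hρ : 0 ≤ ρ)
    {h h' V' : ℝ → ℝ} {z : ℝ → E}
    (hV : ContinuousOn (fun s => (1 / 2) * ‖z s‖ ^ 2) (Ici 0))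
    (hVderiv : ∀ t ≥ (0 : ℝ),
      HasDerivWithinAt (fun s => (1 / 2) * ‖z s‖ ^ 2) (V' t) (Ici t) t)
    (hV' : ∀ t ≥ (0 : ℝ), V' t ≤ -κ * ‖z t‖ ^ 2 + ω)
    (hh : ContinuousOn h (Ici 0))
    (hhderiv : ∀ t ≥ (0 : ℝ), HasDerivWithinAt h (h' t) (Ici t) t)
    (hh' : ∀ t ≥ (0 : ℝ), h' t ≥ -lam * h t - ρ * (κ - lam / 2) * ‖z t‖ ^ 2 + ρ * ω)
    (h0 : h 0 ≥ ρ / 2 * ‖z 0‖ ^ 2) :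
    ∀ t ≥ (0 : ℝ), h t ≥ ρ / 2 * ‖z t‖ ^ 2 ∧ ρ / 2 * ‖z t‖ ^ 2 ≥ 0 := by
  intro t ht
  have barrier : ρ * ((1 / 2) * ‖z t‖ ^ 2) ≤ h t :=
    mul_lyapunov_le_barrier (α := 2 * κ) (ω := ω) (lam := lam) hρ
      (hV.mono Icc_subset_Ici_self) (fun s hs => hVderiv s hs.1)
      (fun s hs => by linarith [hV' s hs.1])
      (hh.mono Icc_subset_Ici_self) (fun s hs => hhderiv s hs.1)
      (fun s hs => by linarith [hh' s hs.1])
      (by linarith) t (right_mem_Icc.mpr ht)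
  exact ⟨by linarith, by positivity⟩

/-- Lyapunov-coupled barrier argument at the core of Theorem 2's proof.
If `(1/2)‖z‖²` decays with rate `κ` up to `ω`, `h' ≥ −λh − ρ(κ − λ/2)‖z‖² + ρω`,
and `h(0) ≥ (ρ/2)‖z(0)‖²`, then `h(t) ≥ (ρ/2)‖z(t)‖² ≥ 0` for all `t ≥ 0`. -/
theorem stmt10 (n : ℕ) (κ ω ρ lam : ℝ)
    (hκ : 0 < κ) (hω : 0 < ω) (hρ : 0 < ρ) (hlam : 0 < lam)
    (h h' : ℝ → ℝ) (z : ℝ → EuclideanSpace ℝ (Fin n))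
    (hz : ∀ t ≥ (0 : ℝ), DifferentiableAt ℝ z t)
    (V' : ℝ → ℝ)
    (hVdiff : ∀ t ≥ (0 : ℝ), HasDerivAt (fun s => (1 / 2) * ‖z s‖ ^ 2) (V' t) t)
    (hV' : ∀ t ≥ (0 : ℝ), V' t ≤ -κ * ‖z t‖ ^ 2 + ω)
    (hhdiff : ∀ t ≥ (0 : ℝ), HasDerivAt h (h' t) t)
    (hh' : ∀ t ≥ (0 : ℝ), h' t ≥ -lam * h t - ρ * (κ - lam / 2) * ‖z t‖ ^ 2 + ρ * ω)
    (h0 : h 0 ≥ ρ / 2 * ‖z 0‖ ^ 2) :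
    ∀ t ≥ (0 : ℝ), h t ≥ ρ / 2 * ‖z t‖ ^ 2 ∧ ρ / 2 * ‖z t‖ ^ 2 ≥ 0 :=
  stmt10_general hρ.le (HasDerivAt.continuousOn hVdiff) (fun t ht => (hVdiff t ht).hasDerivWithinAt)
    hV' (HasDerivAt.continuousOn hhdiff) (fun t ht => (hhdiff t ht).hasDerivWithinAt) hh' h0
end
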